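/- Let λ ∈ 𝒫_X(n) and let ⟨λ,ν⟩ and ⟨λ,ν'⟩ be two reduced marked partitions of type X with the same underlying partition λ. Then d_S⟨λ,ν⟩ = d_S⟨λ,ν'⟩ if and only if ν = ν'. -/

import Mathlib

namespace NilDual

/-- A "partition" is encoded as a multiset of natural numbers (its parts). -/
abbrev Ptn := Multiset ℕ

/-- All parts are positive. -/
def IsPartition (l : Ptn) : Prop := ∀ a ∈ l, 0 < a

/-- `height l a` is the number of parts of `l` that are ≥ `a`. -/
def height (l : Ptn) (a : ℕ) : ℕ := Multiset.card (l.filter (fun p => a ≤ p))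

/-- `psum l j` is the sum of the `j` largest parts of `l`. -/
def psum (l : Ptn) (j : ℕ) : ℕ := ∑ a ∈ Finset.Icc 1 l.sum, min j (height l a)

/-- `Dom l m` means `l ≤ m` in the dominance order. -/
def Dom (l m : Ptn) : Prop := ∀ j : ℕ, psum l j ≤ psum m j

/-- The transpose (conjugate) partition. -/
def transpose (l : Ptn) : Ptn :=
  Multiset.filter (fun x => 0 < x)
    (Multiset.map (fun a => height l a) (Finset.Icc 1 l.sum).val)

/-- The largest part (0 for the empty partition). -/
def maxPart (l : Ptn) : ℕ := l.sup

/-- The smallest part (0 for the empty partition). -/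
noncomputable def minPart (l : Ptn) : ℕ := sInf {a : ℕ | a ∈ l}

/-- `λ⁺`: add 1 to the largest part. -/
def up (l : Ptn) : Ptn := (maxPart l + 1) ::ₘ l.erase (maxPart l)

/-- `λ⁻`: subtract 1 from the smallest part, deleting it if it becomes 0. -/
noncomputable def down (l : Ptn) : Ptn :=
  if minPart l ≤ 1 then l.erase (minPart l)
  else (minPart l - 1) ::ₘ l.erase (minPart l)

/-- The join `λ ∨ μ = (λ* ∪ μ*)*`. -/
def pjoin (l m : Ptn) : Ptn := transpose (transpose l + transpose m)

/-- `λ₋ = (λ*⁻)*`. -/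
noncomputable def lowerStar (l : Ptn) : Ptn := transpose (down (transpose l))

inductive PType | B | C | D
deriving DecidableEq

/-- Parts of this parity must occur with even multiplicity in a partition of type `X`. -/
def badPart : PType → ℕ → Prop
  | PType.B, a => Even a
  | PType.C, a => Odd a
  | PType.D, a => Even a

/-- Membership in `𝒫_X` (sum unconstrained). -/
def InP (X : PType) (l : Ptn) : Prop :=
  IsPartition l ∧ ∀ a : ℕ, badPart X a → Even (l.count a)

/-- The parity of `n` required for `𝒫_X(n)` to be defined. -/
def sumParity : PType → ℕ → Prop
  | PType.B, n => Odd n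
  | PType.C, n => Even n
  | PType.D, n => Even n

/-- `m` is the X-collapse of `l`: `m ∈ 𝒫_X(|l|)`, `m ≤ l` in dominance order, and `m`
dominates every member of `𝒫_X(|l|)` that is dominated by `l`. -/
def IsCollapse (X : PType) (l m : Ptn) : Prop :=
  InP X m ∧ m.sum = l.sum ∧ Dom m l ∧
    ∀ ν : Ptn, InP X ν → ν.sum = l.sum → Dom ν l → Dom ν m

def CollapseDefined (X : PType) (l : Ptn) : Prop := ∃ m, IsCollapse X l m

open Classical in
/-- The X-collapse `λ_X` (junk value `0` if it does not exist). -/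
noncomputable def collapse (X : PType) (l : Ptn) : Ptn :=
  if h : CollapseDefined X l then h.choose else 0

/-- `l` is superior to `m`: smallest part of `l` ≥ largest part of `m`. -/
def Superior (l m : Ptn) : Prop := maxPart m ≤ minPart l

def EvenlySuperior (l m : Ptn) : Prop := ∃ k : ℕ, Even k ∧ maxPart m ≤ k ∧ k ≤ minPart l

def OddlySuperior (l m : Ptn) : Prop := ∃ k : ℕ, Odd k ∧ maxPart m ≤ k ∧ k ≤ minPart l

/-- The parity required of marked parts in type `X`. -/
def markParity : PType → ℕ → Prop
  | PType.C, a => Even a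
  | _, a => Odd a

/-- `(ν, η)` is a marked partition of type `X`, with underlying partition `λ = ν + η`. -/
def IsMarked (X : PType) (nu eta : Ptn) : Prop :=
  InP X (nu + eta) ∧ sumParity X (nu + eta).sum ∧
  (∀ a ∈ nu, nu.count a = 1 ∧ markParity X a) ∧
  ((X = PType.B ∨ X = PType.D) → Even (Multiset.card nu))

/-- The Sommers duality map `d_S` on marked partitions `(ν, η)`. -/
noncomputable def dS (X : PType) (nu eta : Ptn) : Ptn :=
  match X with
  | PType.B => collapse PType.C (transpose (nu + collapse PType.C (down eta)))
  | PType.C => collapse PType.B (transpose (nu + collapse PType.B (up eta)))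
  | PType.D =>
      collapse PType.D (transpose (nu + transpose (collapse PType.D (transpose eta))))

/-- `a` is a markable part of `l` in type `X`. -/
def Markable (X : PType) (l : Ptn) (a : ℕ) : Prop :=
  a ∈ l ∧ markParity X a ∧
    (match X with
     | PType.B => Odd (height l a)
     | PType.C => Even (height l a)
     | PType.D => Even (height l a))

/-- The marked partition `⟨l, ν⟩` is reduced. -/
def Reduced (X : PType) (l nu : Ptn) : Prop := ∀ a ∈ nu, Markable X l a

/-- The parts entering the definition of a special marked partition:
even of odd height (B), odd of even height (C), even of even height (D). -/
def AntiPart (X : PType) (l : Ptn) (a : ℕ) : Prop :=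
  match X with
  | PType.B => Even a ∧ Odd (height l a)
  | PType.C => Odd a ∧ Even (height l a)
  | PType.D => Even a ∧ Even (height l a)

/-- The reduced marked partition `⟨l, ν⟩` is special. -/
def SpecialMP (X : PType) (l nu : Ptn) : Prop :=
  ∀ a ∈ l, AntiPart X l a → Even (height nu a)

/-- `a` is the largest part of `l` whose height satisfies `P`. -/
def LargestWith (l : Ptn) (P : ℕ → Prop) (a : ℕ) : Prop :=
  a ∈ l ∧ P (height l a) ∧ ∀ b ∈ l, P (height l b) → b ≤ a

/-- Height parity for the top marked part in a basic block. -/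
def heightParity : PType → ℕ → Prop
  | PType.B => fun n => Odd n
  | _ => fun n => Even n

/-- A basic block of type `X`. -/
def BasicBlock (X : PType) (nu eta : Ptn) : Prop :=
  IsMarked X nu eta ∧
  ((∃ n1 n2 : ℕ, n1 < n2 ∧ nu = {n2, n1} ∧ n1 = minPart (nu + eta) ∧
      LargestWith (nu + eta) (heightParity X) n2) ∨
   (X = PType.C ∧ ∃ n2 : ℕ, nu = {n2} ∧ LargestWith (nu + eta) (heightParity X) n2))

/-- An ultrabasic block: a basic block with `n₁ ≤ 1`. -/
def Ultrabasic (X : PType) (nu eta : Ptn) : Prop :=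
  BasicBlock X nu eta ∧ (Multiset.card nu = 2 → minPart nu ≤ 1)

/-!
Write `τ_a(λ) = ∑ min(p, a)` for the sum of the `a` largest parts of `λ*`. The collapse of a
partition is explicit: it lowers each sum of largest parts by `0` or `1`, and whether it does is
decided by parities of these sums and of the parts next to them.

Let `a + 1` be a markable part of `λ = ν ∪ η`; then `τ_a(λ)` is even. The outer collapse in `d_S`
does not cross thresholds of the right parity, so `σ_a(d_S⟨λ, ν⟩)` reaches `τ_a(λ)` (or
`τ_a(λ) + 1` in type `C`) exactly when the partition built from `η` has `τ_a` at least `τ_a(η)`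
(or `τ_a(η) + 1`). The inner collapse makes this equivalent to `τ_a(η)` being even, i.e. to
`τ_a(ν)` being even, and the latter has the parity of the height of `a + 1` in `ν`. Hence
`d_S⟨λ, ν⟩` determines the parity of the height in `ν` of every markable part. These parities
determine a multiplicity-free `ν`: compare two candidates at the largest part where they differ.
-/

variable {X : PType} {l m : Ptn} {a j : ℕ}

section Height

theorem height_eq_sum_map (l : Ptn) (a : ℕ) :
    height l a = (l.map fun p => if a ≤ p then 1 else 0).sum := by
  induction l using Multiset.induction with
  | empty => rfl
  | cons p l ih =>
    rw [Multiset.map_cons, Multiset.sum_cons, ← ih, height, Multiset.filter_cons,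
      Multiset.card_add, height]
    split_ifs <;> simp

theorem height_succ_add_count (l : Ptn) (a : ℕ) :
    height l (a + 1) + l.count a = height l a := by
  induction l using Multiset.induction with
  | empty => simp [height]
  | cons p l ih =>
    simp only [height_eq_sum_map, Multiset.map_cons, Multiset.sum_cons, Multiset.count_cons] at ih ⊢
    split_ifs <;> omega

theorem height_antitone (l : Ptn) : Antitone (height l) := fun _ _ hab =>
  Multiset.card_le_card (Multiset.monotone_filter_right l fun _ hp => hab.trans hp)

theorem height_congr (h : ∀ b, a ≤ b → l.count b = m.count b) : height l a = height m a := by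
  unfold height
  congr 1
  ext b
  simp only [Multiset.count_filter]
  split_ifs with hab
  · exact h b hab
  · rfl

theorem eq_of_forall_even_height_iff (hl : l.Nodup) (hm : m.Nodup)
    (h : ∀ a ∈ l + m, (Even (height l a) ↔ Even (height m a))) : l = m := by
  by_contra hne
  have hdiff : {a ∈ (l + m).toFinset | l.count a ≠ m.count a}.Nonempty := by
    obtain ⟨a, ha⟩ := not_forall.1 (Multiset.ext.not.1 hne)
    refine ⟨a, Finset.mem_filter.2 ⟨?_, ha⟩⟩
    rw [Multiset.mem_toFinset, ← Multiset.count_pos, Multiset.count_add]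
    omega
  obtain ⟨a, ha, hmax⟩ := Finset.exists_max_image _ id hdiff
  simp only [Finset.mem_filter, Multiset.mem_toFinset, id] at ha hmax
  have habove : height l (a + 1) = height m (a + 1) := height_congr fun b hb => by
    by_contra hcount
    refine (hmax b ⟨?_, hcount⟩).not_gt hb
    rw [← Multiset.count_pos, Multiset.count_add]
    omega
  have hparity := h a ha.1
  rw [← height_succ_add_count l, ← height_succ_add_count m, habove] at hparity
  have hl_le := Multiset.nodup_iff_count_le_one.1 hl a
  have hm_le := Multiset.nodup_iff_count_le_one.1 hm a
  simp only [Nat.even_iff] at hparity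
  omega

theorem height_eq_zero_of_sum_lt (h : l.sum < a) : height l a = 0 :=
  Multiset.card_eq_zero.2 <| Multiset.filter_eq_nil.2 fun _ hp =>
    ((Multiset.le_sum_of_mem hp).trans_lt h).not_ge

/-- The sum `∑ min(p, a)` over the parts `p` of `l`, i.e. the number of boxes in the first `a`
columns of the Young diagram of `l`. -/
def truncSum (l : Ptn) (a : ℕ) : ℕ := (l.map fun p => min p a).sum

theorem truncSum_add (l m : Ptn) (a : ℕ) : truncSum (l + m) a = truncSum l a + truncSum m a := by
  simp [truncSum]

theorem truncSum_cons (p : ℕ) (l : Ptn) (a : ℕ) :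
    truncSum (p ::ₘ l) a = min p a + truncSum l a := by
  simp [truncSum]

theorem truncSum_succ (l : Ptn) (a : ℕ) :
    truncSum l (a + 1) = truncSum l a + height l (a + 1) := by
  rw [height_eq_sum_map, truncSum, truncSum, ← Multiset.sum_map_add]
  refine congrArg _ (Multiset.map_congr rfl fun p _ => ?_)
  split_ifs <;> omega

theorem truncSum_eq_sum_height (l : Ptn) (a : ℕ) :
    truncSum l a = ∑ b ∈ Finset.range a, height l (b + 1) := by
  induction a with
  | zero => simp [truncSum]
  | succ a ih => rw [truncSum_succ, Finset.sum_range_succ, ih]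

theorem truncSum_eq_sum_of_forall_le (h : ∀ p ∈ l, p ≤ a) : truncSum l a = l.sum := by
  rw [truncSum, Multiset.map_congr rfl fun p hp => min_eq_left (h p hp), Multiset.map_id']

theorem truncSum_eq_card_mul_of_forall_le (h : ∀ p ∈ l, a ≤ p) :
    truncSum l a = Multiset.card l * a := by
  rw [truncSum, Multiset.map_congr rfl fun p hp => min_eq_right (h p hp)]
  simp

end Height

section Duality

theorem psum_eq_sum_range (l : Ptn) (j : ℕ) :
    psum l j = ∑ b ∈ Finset.range l.sum, min j (height l (b + 1)) := by
  rw [Finset.range_eq_Ico, Finset.sum_Ico_add' (fun b => min j (height l b)) 0 l.sum 1]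
  rfl

theorem psum_eq_sum_range_add (l : Ptn) (j a : ℕ) :
    psum l j = ∑ b ∈ Finset.range a, min j (height l (b + 1)) +
      ∑ b ∈ Finset.range l.sum, min j (height l (a + b + 1)) := by
  have hvanish : ∀ b, l.sum ≤ b → min j (height l (b + 1)) = 0 := fun b hb => by
    rw [height_eq_zero_of_sum_lt (by omega), Nat.min_zero]
  rw [← Finset.sum_range_add (fun b => min j (height l (b + 1))), psum_eq_sum_range, add_comm a,
    Finset.sum_range_add, Finset.sum_eq_zero (s := Finset.range a) fun b _ => hvanish _ (by omega),
    add_zero]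

theorem sum_eq_truncSum_add (l : Ptn) (a : ℕ) :
    l.sum = truncSum l a + ∑ b ∈ Finset.range l.sum, height l (a + b + 1) := by
  rw [truncSum_eq_sum_height, ← Finset.sum_range_add (fun b => height l (b + 1)),
    ← truncSum_eq_sum_height, truncSum_eq_sum_of_forall_le]
  exact fun p hp => (Multiset.le_sum_of_mem hp).trans (Nat.le_add_left _ _)

/-! The concave functions `psum l` and `truncSum l` are Legendre dual: `truncSum l a` is the minimum
over `j` of `l.sum + j * a - psum l j`, attained where `psum l` has slope `a`. -/

theorem psum_add_truncSum_le (l : Ptn) (j a : ℕ) :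
    psum l j + truncSum l a ≤ l.sum + j * a := by
  have hhead : ∑ b ∈ Finset.range a, min j (height l (b + 1)) ≤ j * a :=
    (Finset.sum_le_card_nsmul _ _ j fun _ _ => min_le_left _ _).trans_eq (by simp [mul_comm])
  have htail : ∑ b ∈ Finset.range l.sum, min j (height l (a + b + 1)) ≤
      ∑ b ∈ Finset.range l.sum, height l (a + b + 1) :=
    Finset.sum_le_sum fun _ _ => min_le_right _ _
  have := psum_eq_sum_range_add l j a
  have := sum_eq_truncSum_add l a
  omega

theorem psum_add_truncSum_eq (hlow : height l (a + 1) ≤ j) (hhigh : a = 0 ∨ j ≤ height l a) :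
    psum l j + truncSum l a = l.sum + j * a := by
  have hhead : ∑ b ∈ Finset.range a, min j (height l (b + 1)) = j * a := by
    rw [Finset.sum_const_nat (m := j), Finset.card_range, mul_comm]
    intro b hb
    have hba : b + 1 ≤ a := Finset.mem_range.1 hb
    have := height_antitone l hba
    omega
  have htail : ∑ b ∈ Finset.range l.sum, min j (height l (a + b + 1)) =
      ∑ b ∈ Finset.range l.sum, height l (a + b + 1) :=
    Finset.sum_congr rfl fun b _ => min_eq_right <|
      (height_antitone l (by omega : a + 1 ≤ a + b + 1)).trans hlow
  have := psum_eq_sum_range_add l j a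
  have := sum_eq_truncSum_add l a
  omega

theorem psum_zero (l : Ptn) : psum l 0 = 0 := by simp [psum]

theorem psum_eq_sum_of_height_one_le (h : height l 1 ≤ j) : psum l j = l.sum := by
  simpa [truncSum] using psum_add_truncSum_eq (a := 0) h (Or.inl rfl)

theorem psum_height_succ_add_truncSum (l : Ptn) (a : ℕ) :
    psum l (height l (a + 1)) + truncSum l a = l.sum + height l (a + 1) * a :=
  psum_add_truncSum_eq le_rfl (Or.inr (height_antitone l a.le_succ))

theorem psum_height (l : Ptn) (a : ℕ) :
    psum l (height l a) = psum l (height l (a + 1)) + l.count a * a := by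
  have htop := psum_add_truncSum_eq (height_antitone l a.le_succ) (Or.inr le_rfl)
  have hbot := psum_height_succ_add_truncSum l a
  rw [← height_succ_add_count l a, add_mul] at htop
  rw [← height_succ_add_count l a]
  omega

theorem truncSum_le_of_dom (hsum : l.sum = m.sum) (hdom : Dom l m) (a : ℕ) :
    truncSum m a ≤ truncSum l a := by
  have hl := psum_height_succ_add_truncSum l a
  have hm := psum_add_truncSum_le m (height l (a + 1)) a
  have := hdom (height l (a + 1))
  omega

end Duality

section Parts

/-- The partition whose parts are the nonzero terms among `d 0, …, d (N - 1)`. -/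
def ofSeq (d : ℕ → ℕ) (N : ℕ) : Ptn := ((Multiset.range N).map d).filter (0 < ·)

theorem isPartition_ofSeq (d : ℕ → ℕ) (N : ℕ) : IsPartition (ofSeq d N) :=
  fun _ ha => (Multiset.mem_filter.1 ha).2

theorem height_ofSeq (d : ℕ → ℕ) (N a : ℕ) :
    height (ofSeq d N) (a + 1) = {i ∈ Finset.range N | a < d i}.card := by
  rw [height, ofSeq, Multiset.filter_filter, Multiset.filter_map, Multiset.card_map]
  refine congrArg _ (Multiset.filter_congr fun i _ => ?_)
  simp only [Function.comp_apply]
  omega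

theorem lt_height_ofSeq_iff {d : ℕ → ℕ} {N : ℕ} (hd : Antitone d) (hN : d N = 0) :
    j < height (ofSeq d N) (a + 1) ↔ a < d j := by
  rw [height_ofSeq]
  constructor <;> contrapose!
  · intro hj
    have hsub : {i ∈ Finset.range N | a < d i} ⊆ Finset.range j := fun i hi => by
      have hai := (Finset.mem_filter.1 hi).2
      exact Finset.mem_range.2 (not_le.1 fun hji => (hj.trans_lt hai).not_ge (hd hji))
    simpa using Finset.card_le_card hsub
  · intro hcard
    by_contra! haj
    have hjN : j < N := not_le.1 fun hNj => by
      have := hd hNj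
      omega
    have hsub : Finset.range (j + 1) ⊆ {i ∈ Finset.range N | a < d i} := fun i hi => by
      have hij : i ≤ j := Nat.lt_succ_iff.1 (Finset.mem_range.1 hi)
      exact Finset.mem_filter.2 ⟨Finset.mem_range.2 (by omega), haj.trans_le (hd hij)⟩
    have := Finset.card_le_card hsub
    rw [Finset.card_range] at this
    omega

theorem transpose_eq_ofSeq (l : Ptn) :
    transpose l = ofSeq (fun i => height l (i + 1)) l.sum := by
  have hIcc : (Finset.Icc 1 l.sum).val = (Multiset.range l.sum).map (· + 1) := by
    change _ = ((Finset.range l.sum).map (addRightEmbedding 1)).val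
    rw [Finset.range_eq_Ico, Finset.map_add_right_Ico]
    rfl
  rw [transpose, ofSeq, hIcc, Multiset.map_map]
  rfl

/-- The `j`-th largest part of `l`, counted from `0`, and `0` if `l` has at most `j` parts;
it is the length of the corresponding column of the transpose. -/
def part (l : Ptn) (j : ℕ) : ℕ := height (transpose l) (j + 1)

theorem lt_part_iff : a < part l j ↔ j < height l (a + 1) := by
  rw [part, transpose_eq_ofSeq, lt_height_ofSeq_iff]
  · exact fun i k hik => height_antitone l (Nat.succ_le_succ hik)
  · exact height_eq_zero_of_sum_lt l.sum.lt_succ_self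

theorem part_antitone (l : Ptn) : Antitone (part l) :=
  fun _ _ hij => height_antitone _ (Nat.succ_le_succ hij)

theorem part_eq_zero_iff : part l j = 0 ↔ height l 1 ≤ j := by
  rw [← not_lt, ← lt_part_iff, Nat.pos_iff_ne_zero, not_not]

theorem part_ofSeq {d : ℕ → ℕ} {N : ℕ} (hd : Antitone d) (hN : d N = 0) (j : ℕ) :
    part (ofSeq d N) j = d j :=
  eq_of_forall_lt_iff fun _ => lt_part_iff.trans (lt_height_ofSeq_iff hd hN)

theorem part_transpose (l : Ptn) (j : ℕ) : part (transpose l) j = height l (j + 1) := by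
  refine eq_of_forall_lt_iff fun a => lt_part_iff.trans ?_
  exact lt_part_iff

theorem psum_succ (l : Ptn) (j : ℕ) : psum l (j + 1) = psum l j + part l j := by
  rw [part, transpose_eq_ofSeq, height_ofSeq, Finset.card_filter, psum_eq_sum_range,
    psum_eq_sum_range, ← Finset.sum_add_distrib]
  refine Finset.sum_congr rfl fun b _ => ?_
  split_ifs <;> omega

theorem psum_eq_sum_part (l : Ptn) (j : ℕ) : psum l j = ∑ i ∈ Finset.range j, part l i := by
  induction j with
  | zero => rw [psum_zero, Finset.sum_range_zero]
  | succ j ih => rw [psum_succ, Finset.sum_range_succ, ih]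

theorem psum_transpose (l : Ptn) (j : ℕ) : psum (transpose l) j = truncSum l j := by
  rw [psum_eq_sum_part, truncSum_eq_sum_height]
  exact Finset.sum_congr rfl fun i _ => part_transpose l i

theorem truncSum_transpose (l : Ptn) (j : ℕ) : truncSum (transpose l) j = psum l j := by
  rw [psum_eq_sum_part, truncSum_eq_sum_height]
  rfl

theorem sum_transpose (l : Ptn) : (transpose l).sum = l.sum := by
  have hpsum := psum_transpose l (l.sum + height (transpose l) 1)
  rwa [psum_eq_sum_of_height_one_le (Nat.le_add_left _ _), truncSum_eq_sum_of_forall_le] at hpsum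
  exact fun p hp => (Multiset.le_sum_of_mem hp).trans (Nat.le_add_right _ _)

theorem height_part_succ_add_one (h : part l (j + 1) < part l j) :
    height l (part l (j + 1) + 1) = j + 1 := by
  have hlow := lt_part_iff.1 h
  have hhigh := (lt_part_iff (l := l) (a := part l (j + 1)) (j := j + 1)).not.1 (lt_irrefl _)
  omega

theorem part_succ_lt_part (h : height l (a + 1) = j + 1) : part l (j + 1) < part l j := by
  have hlow : a < part l j := lt_part_iff.2 (by omega)
  have hhigh : ¬ a < part l (j + 1) := lt_part_iff.not.2 (by omega)
  omega

end Parts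

section Parity

/-- The shift `t` making the parity condition uniform in the type: the parts `a` with `a + t` odd
are those whose multiplicity must be even. -/
def parityShift : PType → ℕ
  | PType.C => 0
  | _ => 1

theorem badPart_iff (X : PType) (a : ℕ) : badPart X a ↔ Odd (a + parityShift X) := by
  cases X <;> simp [badPart, parityShift, Nat.odd_add_one]

theorem even_sum_map_of_forall_odd {ι : Type*} [DecidableEq ι] {s : Multiset ι} {f : ι → ℕ}
    (h : ∀ i, Odd (f i) → Even (s.count i)) : Even (s.map f).sum := by
  rw [Finset.sum_multiset_map_count]
  refine Finset.even_sum _ fun i _ => Nat.even_mul.2 ?_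
  rw [← Nat.not_odd_iff_even (n := f i)]
  exact (em _).imp_left (h i)

theorem InP.even_truncSum_add (h : InP X l) (a : ℕ) :
    Even (truncSum l a + l.sum + height l (a + 1) * (a + parityShift X)) := by
  have hsum : truncSum l a + l.sum + height l (a + 1) * (a + parityShift X) =
      (l.map fun p => min p a + p + (if a + 1 ≤ p then 1 else 0) * (a + parityShift X)).sum := by
    rw [Multiset.sum_map_add, Multiset.sum_map_add, Multiset.map_id', Multiset.sum_map_mul_right,
      ← height_eq_sum_map, truncSum]
  rw [hsum]
  refine even_sum_map_of_forall_odd fun p hp => h.2 p ((badPart_iff X p).2 ?_)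
  split_ifs at hp with hap
  · rw [min_eq_right (by omega)] at hp
    grind
  · rw [min_eq_left (by omega)] at hp
    grind

/-- The sum of the `j` largest parts, each increased by `parityShift X`. -/
def shiftedSum (X : PType) (l : Ptn) (j : ℕ) : ℕ := psum l j + j * parityShift X

theorem shiftedSum_zero (X : PType) (l : Ptn) : shiftedSum X l 0 = 0 := by
  simp [shiftedSum, psum_zero]

theorem shiftedSum_succ (X : PType) (l : Ptn) (j : ℕ) :
    shiftedSum X l (j + 1) = shiftedSum X l j + (part l j + parityShift X) := by
  rw [shiftedSum, shiftedSum, psum_succ]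
  ring

theorem shiftedSum_height (X : PType) (l : Ptn) (a : ℕ) :
    shiftedSum X l (height l a) =
      shiftedSum X l (height l (a + 1)) + l.count a * (a + parityShift X) := by
  rw [shiftedSum, shiftedSum, psum_height, ← height_succ_add_count l a]
  ring

theorem InP.even_shiftedSum_height (h : InP X l) (a : ℕ) :
    Even (shiftedSum X l (height l (a + 1))) := by
  have heven := h.even_truncSum_add a
  have hdual := psum_height_succ_add_truncSum l a
  rw [mul_add] at heven
  rw [shiftedSum]
  grind

theorem InP.part_eq_part_succ (h : InP X l) (hodd : Odd (shiftedSum X l (j + 1))) :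
    part l j = part l (j + 1) := by
  refine (part_antitone l j.le_succ).antisymm' (not_lt.1 fun hlt => ?_)
  rw [← height_part_succ_add_one hlt] at hodd
  exact Nat.not_even_iff_odd.2 hodd (h.even_shiftedSum_height _)

theorem InP.odd_part_add (h : InP X l) (hodd : Odd (shiftedSum X l (j + 1))) :
    Odd (part l j + parityShift X) := by
  induction j with
  | zero => rwa [shiftedSum_succ, shiftedSum_zero, zero_add] at hodd
  | succ j ih =>
    by_contra heven
    rw [Nat.not_odd_iff_even] at heven
    rw [shiftedSum_succ] at hodd
    have hodd' := (Nat.odd_add.1 hodd).2 heven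
    rw [← h.part_eq_part_succ hodd'] at heven
    exact Nat.not_even_iff_odd.2 (ih hodd') heven

theorem inP_of_forall_part_eq_part_succ (hl : IsPartition l)
    (hflat : ∀ j, Odd (shiftedSum X l (j + 1)) → part l j = part l (j + 1)) : InP X l := by
  have heven (a : ℕ) : Even (shiftedSum X l (height l (a + 1))) := by
    by_contra hodd
    rw [Nat.not_even_iff_odd] at hodd
    rcases hj : height l (a + 1) with _ | j
    · simp [hj, shiftedSum_zero] at hodd
    · exact (part_succ_lt_part hj).ne' (hflat j (hj ▸ hodd))
  refine ⟨hl, fun a hbad => ?_⟩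
  rcases a with _ | a
  · rw [Multiset.count_eq_zero_of_notMem fun h0 => (hl 0 h0).false]
    exact Even.zero
  · have hmul := (Nat.even_add.1 (shiftedSum_height X l (a + 1) ▸ heven a)).1 (heven (a + 1))
    rw [badPart_iff, ← Nat.not_even_iff_odd] at hbad
    exact (Nat.even_mul.1 hmul).resolve_right hbad

end Parity

section Collapse

/-- The amount by which the `X`-collapse lowers the sum of the `j` largest parts of `l`: it is `1`
where the shifted sum is odd, except in the middle of a block of equal parts whose multiplicity in
a partition of type `X` is even. -/
def collapseDefect (X : PType) (l : Ptn) : ℕ → ℕ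
  | 0 => 0
  | j + 1 =>
    if Odd (shiftedSum X l (j + 1)) ∧
        (part l j = part l (j + 1) → Even (part l j + parityShift X)) then 1 else 0

theorem collapseDefect_succ_eq_one_iff :
    collapseDefect X l (j + 1) = 1 ↔ Odd (shiftedSum X l (j + 1)) ∧
      (part l j = part l (j + 1) → Even (part l j + parityShift X)) := by
  simp [collapseDefect]

theorem collapseDefect_le_one (X : PType) (l : Ptn) : ∀ j, collapseDefect X l j ≤ 1
  | 0 => Nat.zero_le 1
  | j + 1 => by
    rw [collapseDefect]
    split_ifs <;> simp

theorem collapseDefect_eq_zero_of_even (h : Even (shiftedSum X l j)) :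
    collapseDefect X l j = 0 := by
  rcases j with _ | j
  · rfl
  · exact if_neg fun hodd => Nat.not_even_iff_odd.2 hodd.1 h

theorem collapseDefect_eq_one_of_even_part (hodd : Odd (shiftedSum X l j))
    (heven : Even (part l j + parityShift X)) : collapseDefect X l j = 1 := by
  rcases j with _ | j
  · simp [shiftedSum_zero] at hodd
  · exact collapseDefect_succ_eq_one_iff.2 ⟨hodd, fun heq => heq ▸ heven⟩

theorem collapseDefect_succ_eq_zero_of_part_eq_zero (hl : X = PType.C → Even l.sum)
    (h : part l j = 0) : collapseDefect X l (j + 1) = 0 := by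
  have hle := collapseDefect_le_one X l (j + 1)
  by_contra hne
  obtain ⟨hodd, hflat⟩ := collapseDefect_succ_eq_one_iff.1
    (hle.antisymm (Nat.one_le_iff_ne_zero.2 hne))
  have hpart : part l (j + 1) = 0 := Nat.eq_zero_of_le_zero (h ▸ part_antitone l j.le_succ)
  rw [shiftedSum, psum_eq_sum_of_height_one_le (part_eq_zero_iff.1 hpart)] at hodd
  have hshift := hflat (h.trans hpart.symm)
  rw [h, zero_add] at hshift
  cases X with
  | C => exact Nat.not_even_iff_odd.2 hodd (hl rfl)
  | B | D => exact Nat.not_even_one hshift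

/-- The parts, in decreasing order, of the `X`-collapse of `l`. -/
def collapsePart (X : PType) (l : Ptn) (j : ℕ) : ℕ :=
  part l j + collapseDefect X l j - collapseDefect X l (j + 1)

theorem collapsePart_add_defect (hl : X = PType.C → Even l.sum) (j : ℕ) :
    collapsePart X l j + collapseDefect X l (j + 1) = part l j + collapseDefect X l j := by
  refine Nat.sub_add_cancel ?_
  rcases Nat.eq_zero_or_pos (part l j) with hzero | hpos
  · simp [collapseDefect_succ_eq_zero_of_part_eq_zero hl hzero]
  · exact (collapseDefect_le_one X l (j + 1)).trans (by omega)

theorem sum_collapsePart_add_defect (hl : X = PType.C → Even l.sum) (j : ℕ) :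
    ∑ i ∈ Finset.range j, collapsePart X l i + collapseDefect X l j = psum l j := by
  induction j with
  | zero => simp [collapseDefect, psum_zero]
  | succ j ih =>
    have := collapsePart_add_defect hl j
    rw [Finset.sum_range_succ, psum_succ]
    omega

theorem collapsePart_antitone (hl : X = PType.C → Even l.sum) : Antitone (collapsePart X l) := by
  refine antitone_nat_of_succ_le fun j => ?_
  have hpart := part_antitone l (Nat.le_add_right j 1)
  have hj := collapsePart_add_defect hl j
  have hj' := collapsePart_add_defect hl (j + 1)
  have hle := collapseDefect_le_one X l (j + 1)
  by_cases hdefect : collapseDefect X l (j + 1) = 1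
  · obtain ⟨hodd, hflat⟩ := collapseDefect_succ_eq_one_iff.1 hdefect
    have hprev : Even (part l j + parityShift X) → collapseDefect X l j = 1 := fun heven =>
      collapseDefect_eq_one_of_even_part
        ((Nat.odd_add.1 (shiftedSum_succ X l j ▸ hodd)).2 heven) heven
    have hnext : Even (part l (j + 1) + parityShift X) → collapseDefect X l (j + 1 + 1) = 1 :=
      fun heven => collapseDefect_succ_eq_one_iff.2
        ⟨by rw [shiftedSum_succ]; exact hodd.add_even heven, fun _ => heven⟩
    simp only [Nat.even_iff] at hprev hnext hflat
    omega
  · omega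

theorem collapsePart_eq_succ_of_odd (hl : X = PType.C → Even l.sum)
    (h : Odd (∑ i ∈ Finset.range (j + 1), collapsePart X l i + (j + 1) * parityShift X)) :
    collapsePart X l j = collapsePart X l (j + 1) := by
  have hsum := sum_collapsePart_add_defect hl (j + 1)
  have hle := collapseDefect_le_one X l (j + 1)
  have hdefect : collapseDefect X l (j + 1) = 0 := by
    by_contra hne
    have hodd := (collapseDefect_succ_eq_one_iff.1
    (hle.antisymm (Nat.one_le_iff_ne_zero.2 hne))).1
    rw [shiftedSum, ← hsum] at hodd
    grind
  have hodd : Odd (shiftedSum X l (j + 1)) := by rwa [shiftedSum, ← hsum, hdefect, add_zero]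
  obtain ⟨hpart, hpodd⟩ : part l j = part l (j + 1) ∧ Odd (part l j + parityShift X) := by
    have := collapseDefect_succ_eq_one_iff.not.1 (hdefect ▸ zero_ne_one)
    simpa [hodd] using this
  have hprev : collapseDefect X l j = 0 := collapseDefect_eq_zero_of_even <| by
    rw [shiftedSum_succ] at hodd
    exact (Nat.odd_add'.1 hodd).1 hpodd
  have hnext : collapseDefect X l (j + 1 + 1) = 0 := collapseDefect_eq_zero_of_even <| by
    rw [shiftedSum_succ, ← hpart]
    exact hodd.add_odd hpodd
  have hj := collapsePart_add_defect hl j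
  have hj' := collapsePart_add_defect hl (j + 1)
  omega

/-- The explicit form of the `X`-collapse. -/
def explicitCollapse (X : PType) (l : Ptn) : Ptn :=
  ofSeq (collapsePart X l) (height l 1 + 1)

theorem part_explicitCollapse (hl : X = PType.C → Even l.sum) (j : ℕ) :
    part (explicitCollapse X l) j = collapsePart X l j := by
  refine part_ofSeq (collapsePart_antitone hl) ?_ j
  have hzero : part l (height l 1) = 0 := part_eq_zero_iff.2 le_rfl
  have hzero' : part l (height l 1 + 1) = 0 := part_eq_zero_iff.2 (Nat.le_succ _)
  rw [collapsePart, hzero', collapseDefect_succ_eq_zero_of_part_eq_zero hl hzero, Nat.zero_sub]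

theorem psum_explicitCollapse (hl : X = PType.C → Even l.sum) (j : ℕ) :
    psum (explicitCollapse X l) j = ∑ i ∈ Finset.range j, collapsePart X l i := by
  rw [psum_eq_sum_part]
  exact Finset.sum_congr rfl fun i _ => part_explicitCollapse hl i

theorem psum_explicitCollapse_add_defect (hl : X = PType.C → Even l.sum) (j : ℕ) :
    psum (explicitCollapse X l) j + collapseDefect X l j = psum l j := by
  rw [psum_explicitCollapse hl, sum_collapsePart_add_defect hl]

theorem inP_explicitCollapse (hl : X = PType.C → Even l.sum) : InP X (explicitCollapse X l) := by
  refine inP_of_forall_part_eq_part_succ (isPartition_ofSeq _ _) fun j hodd => ?_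
  rw [shiftedSum, psum_explicitCollapse hl] at hodd
  rw [part_explicitCollapse hl, part_explicitCollapse hl]
  exact collapsePart_eq_succ_of_odd hl hodd

theorem sum_explicitCollapse (hl : X = PType.C → Even l.sum) :
    (explicitCollapse X l).sum = l.sum := by
  have hpsum :=
    psum_explicitCollapse_add_defect hl (height l 1 + height (explicitCollapse X l) 1 + 1)
  have hpart : part l (height l 1 + height (explicitCollapse X l) 1) = 0 :=
    part_eq_zero_iff.2 (Nat.le_add_right _ _)
  rwa [collapseDefect_succ_eq_zero_of_part_eq_zero hl hpart, add_zero,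
    psum_eq_sum_of_height_one_le (by omega), psum_eq_sum_of_height_one_le (by omega)] at hpsum

theorem InP.collapseDefect_eq_zero (hm : InP X m) (hdom : Dom m l)
    (heq : psum m j = psum l j) : collapseDefect X l j = 0 := by
  rcases j with _ | j
  · rfl
  have hle := collapseDefect_le_one X l (j + 1)
  by_contra hne
  obtain ⟨hodd, hflat⟩ := collapseDefect_succ_eq_one_iff.1
    (hle.antisymm (Nat.one_le_iff_ne_zero.2 hne))
  rw [shiftedSum, ← heq, ← shiftedSum] at hodd
  have hm_flat := hm.part_eq_part_succ hodd
  have hm_odd := hm.odd_part_add hodd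
  have hprev := hdom j
  have hnext := hdom (j + 1 + 1)
  simp only [psum_succ] at heq hnext
  have hpart := part_antitone l (Nat.le_add_right j 1)
  have hpart_eq : part l j = part m j := by omega
  exact Nat.not_even_iff_odd.2 hm_odd (hpart_eq ▸ hflat (by omega))

theorem isCollapse_explicitCollapse (hl : X = PType.C → Even l.sum) :
    IsCollapse X l (explicitCollapse X l) := by
  refine ⟨inP_explicitCollapse hl, sum_explicitCollapse hl, fun j => ?_, fun m hm _ hdom j => ?_⟩
  · exact Nat.le.intro (psum_explicitCollapse_add_defect hl j)
  · have hpsum := psum_explicitCollapse_add_defect hl j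
    have hle := collapseDefect_le_one X l j
    have hmj := hdom j
    rcases hmj.eq_or_lt with heq | hlt
    · rw [hm.collapseDefect_eq_zero hdom heq] at hpsum
      omega
    · omega

theorem isCollapse_collapse (hl : X = PType.C → Even l.sum) :
    IsCollapse X l (collapse X l) := by
  have hdef : CollapseDefined X l := ⟨_, isCollapse_explicitCollapse hl⟩
  rw [collapse, dif_pos hdef]
  exact hdef.choose_spec

theorem psum_collapse_add_defect (hl : X = PType.C → Even l.sum) (j : ℕ) :
    psum (collapse X l) j + collapseDefect X l j = psum l j := by
  obtain ⟨hin, hsum, hdom, hmax⟩ := isCollapse_collapse hl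
  obtain ⟨hin', hsum', hdom', hmax'⟩ := isCollapse_explicitCollapse hl
  rw [← psum_explicitCollapse_add_defect hl,
    (hmax' _ hin hsum hdom j).antisymm (hmax _ hin' hsum' hdom' j)]

theorem le_psum_collapse_iff (hl : X = PType.C → Even l.sum) {x : ℕ}
    (hx : Even (x + j * parityShift X)) : x ≤ psum (collapse X l) j ↔ x ≤ psum l j := by
  have hpsum := psum_collapse_add_defect hl j
  refine ⟨fun h => by omega, fun h => ?_⟩
  rcases h.eq_or_lt with rfl | hlt
  · rw [collapseDefect_eq_zero_of_even hx] at hpsum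
    omega
  · have := collapseDefect_le_one X l j
    omega

theorem truncSum_lt_truncSum_collapse_iff (hl : X = PType.C → Even l.sum)
    (ha : Even (a + parityShift X)) :
    truncSum l a < truncSum (collapse X l) a ↔ Odd (truncSum l a + l.sum) := by
  obtain ⟨hin, hsum, hdom, -⟩ := isCollapse_collapse hl
  have hle := truncSum_le_of_dom hsum hdom a
  have hparity : Even (truncSum (collapse X l) a + l.sum) := by
    have := hin.even_truncSum_add a
    rw [hsum, Nat.even_add] at this
    exact this.2 (ha.mul_left _)
  constructor
  · contrapose
    intro heven
    rw [Nat.not_odd_iff_even] at heven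
    have hdual := psum_height_succ_add_truncSum l a
    have hdual' := psum_add_truncSum_le (collapse X l) (height l (a + 1)) a
    have hshift : Even (psum l (height l (a + 1)) + height l (a + 1) * parityShift X) := by
      have := ha.mul_left (height l (a + 1))
      rw [mul_add] at this
      grind
    have := (le_psum_collapse_iff hl hshift).2 le_rfl
    omega
  · intro hodd
    refine hle.lt_of_ne fun heq => ?_
    rw [heq] at hodd
    exact Nat.not_even_iff_odd.2 hodd hparity

end Collapse

section Extremal

theorem maxPart_mem (h : l ≠ 0) : maxPart l ∈ l := by
  obtain ⟨p, hp, hsup⟩ := Finset.exists_mem_eq_sup l.toFinset (Multiset.toFinset_nonempty.2 h) id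
  have hmax : maxPart l = p := by
    rw [maxPart, ← Multiset.sup_dedup, ← Multiset.toFinset_val, ← id_eq p, ← hsup,
      Finset.sup_def, Multiset.map_id]
  exact hmax ▸ Multiset.mem_toFinset.1 hp

theorem minPart_mem (h : l ≠ 0) : minPart l ∈ l := Nat.sInf_mem (Multiset.exists_mem_of_ne_zero h)

theorem truncSum_eq_min_add_erase {p : ℕ} (h : p ∈ l) (a : ℕ) :
    truncSum l a = min p a + truncSum (l.erase p) a := by
  rw [← truncSum_cons, Multiset.cons_erase h]

theorem truncSum_up (h : l ≠ 0) (a : ℕ) :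
    truncSum (up l) a = truncSum l a + if maxPart l < a then 1 else 0 := by
  rw [up, truncSum_cons, truncSum_eq_min_add_erase (maxPart_mem h)]
  split_ifs <;> omega

theorem sum_up (h : l ≠ 0) : (up l).sum = l.sum + 1 := by
  rw [up, Multiset.sum_cons, ← Multiset.sum_erase (maxPart_mem h)]
  omega

theorem truncSum_down_add (hl : IsPartition l) (h : l ≠ 0) (a : ℕ) :
    truncSum (down l) a + (if minPart l ≤ a then 1 else 0) = truncSum l a := by
  have hpos := hl _ (minPart_mem h)
  rw [truncSum_eq_min_add_erase (minPart_mem h), down, apply_ite (truncSum · a), truncSum_cons]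
  split_ifs <;> omega

theorem sum_down_add_one (hl : IsPartition l) (h : l ≠ 0) : (down l).sum + 1 = l.sum := by
  have hpos := hl _ (minPart_mem h)
  rw [← Multiset.sum_erase (minPart_mem h), down, apply_ite Multiset.sum, Multiset.sum_cons]
  split_ifs <;> omega

theorem ne_zero_of_odd_sum (h : Odd l.sum) : l ≠ 0 := by
  rintro rfl
  exact Nat.not_odd_zero h

theorem even_sum_down (hl : IsPartition l) (h : Odd l.sum) : Even (down l).sum := by
  rw [← sum_down_add_one hl (ne_zero_of_odd_sum h)] at h
  exact Nat.not_odd_iff_even.1 (Nat.odd_add_one.1 h)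

end Extremal

section InnerDual

/-- The type of the partitions Lusztig–Spaltenstein dual to those of type `X`. -/
def dualType : PType → PType
  | PType.B => PType.C
  | PType.C => PType.B
  | PType.D => PType.D

/-- The partition to which the marked parts are added in the definition of `dS`, before transposing
and collapsing: `(η⁻)_C`, `(η⁺)_B` or `((η*)_D)*`. -/
noncomputable def innerDual : PType → Ptn → Ptn
  | PType.B, l => collapse PType.C (down l)
  | PType.C, l => collapse PType.B (up l)
  | PType.D, l => transpose (collapse PType.D (transpose l))

theorem dS_eq_collapse_innerDual (X : PType) (nu eta : Ptn) :
    dS X nu eta = collapse (dualType X) (transpose (nu + innerDual X eta)) := by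
  cases X <;> rfl

theorem truncSum_le_collapse_down_iff (hl : IsPartition l) (hsum : Odd l.sum) (ha : Even a) :
    truncSum l a ≤ truncSum (collapse PType.C (down l)) a ↔ Even (truncSum l a) := by
  have hdown := truncSum_down_add hl (ne_zero_of_odd_sum hsum) a
  have heven := even_sum_down hl hsum
  obtain ⟨-, hsum_collapse, hdom, -⟩ := isCollapse_collapse (X := PType.C) fun _ => heven
  split_ifs at hdown with hmin
  · have hlt := truncSum_lt_truncSum_collapse_iff (X := PType.C) (fun _ => heven) ha
    grind
  · have hle := truncSum_le_of_dom hsum_collapse hdom a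
    have hcard : truncSum l a = Multiset.card l * a :=
      truncSum_eq_card_mul_of_forall_le fun p hp => (not_le.1 hmin).le.trans (Nat.sInf_le hp)
    exact iff_of_true (hdown ▸ hle) (hcard ▸ ha.mul_left _)

theorem truncSum_lt_collapse_up_iff (hne : l ≠ 0) (hsum : Even l.sum) (ha : Odd a) :
    truncSum l a < truncSum (collapse PType.B (up l)) a ↔ Even (truncSum l a) := by
  have hup := truncSum_up hne a
  have hsum_up := sum_up hne
  obtain ⟨-, hsum_collapse, hdom, -⟩ := isCollapse_collapse (X := PType.B) (l := up l) nofun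
  split_ifs at hup with hmax
  · have hle := truncSum_le_of_dom hsum_collapse hdom a
    have htotal : truncSum l a = l.sum :=
      truncSum_eq_sum_of_forall_le fun p hp => (Multiset.le_sup hp).trans hmax.le
    exact iff_of_true (by omega) (htotal ▸ hsum)
  · have hlt := truncSum_lt_truncSum_collapse_iff (X := PType.B) (l := up l) nofun ha.add_one
    grind

theorem truncSum_le_transpose_collapse_transpose_iff (hl : InP PType.D l) (hsum : Even l.sum)
    (ha : Even a) :
    truncSum l a ≤ truncSum (transpose (collapse PType.D (transpose l))) a ↔
      Even (truncSum l a) := by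
  have hpsum := psum_collapse_add_defect (X := PType.D) (l := transpose l) nofun a
  rw [← truncSum_transpose, psum_transpose] at hpsum
  have hshift : shiftedSum PType.D (transpose l) a = truncSum l a + a := by
    rw [shiftedSum, psum_transpose]
    exact congrArg _ (mul_one a)
  constructor
  · contrapose
    rw [Nat.not_even_iff_odd]
    intro hodd
    have hheight : Odd (height l (a + 1)) := by
      have := hl.even_truncSum_add a
      simp only [parityShift] at this
      grind
    have hdefect : collapseDefect PType.D (transpose l) a = 1 :=
      collapseDefect_eq_one_of_even_part (hshift ▸ hodd.add_even ha)
        (part_transpose l a ▸ hheight.add_one)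
    omega
  · intro heven
    have hdefect := collapseDefect_eq_zero_of_even (hshift ▸ heven.add ha)
    omega

/-- The excess over `truncSum` that distinguishes an even value in type `X`; it comes from `η⁺`
having one box more than `η` in type `C`. -/
def markOffset : PType → ℕ
  | PType.C => 1
  | _ => 0

theorem truncSum_add_markOffset_le_innerDual_iff (hl : InP X l) (hsum : sumParity X l.sum)
    (hne : X = PType.C → l ≠ 0) (ha : badPart X a) :
    truncSum l a + markOffset X ≤ truncSum (innerDual X l) a ↔ Even (truncSum l a) := by
  cases X with
  | B => exact truncSum_le_collapse_down_iff hl.1 hsum ha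
  | C => exact truncSum_lt_collapse_up_iff (hne rfl) hsum ha
  | D => exact truncSum_le_transpose_collapse_transpose_iff hl hsum ha

end InnerDual

section Marked

variable {nu eta : Ptn}

theorem IsMarked.nodup_left (h : IsMarked X nu eta) : nu.Nodup :=
  Multiset.nodup_iff_count_eq_one.2 fun a ha => (h.2.2.1 a ha).1

theorem IsMarked.inP_left (h : IsMarked X nu eta) : InP X nu := by
  refine ⟨fun a ha => h.1.1 a (Multiset.mem_add.2 (Or.inl ha)), fun a hbad => ?_⟩
  rw [Multiset.count_eq_zero_of_notMem]
  · exact Even.zero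
  · intro ha
    have hmark := (h.2.2.1 a ha).2
    cases X <;> simp only [badPart, markParity] at hbad hmark <;> grind

theorem IsMarked.inP_right (h : IsMarked X nu eta) : InP X eta := by
  refine ⟨fun a ha => h.1.1 a (Multiset.mem_add.2 (Or.inr ha)), fun a hbad => ?_⟩
  have hcount := h.1.2 a hbad
  rw [Multiset.count_add] at hcount
  exact (Nat.even_add.1 hcount).1 (h.inP_left.2 a hbad)

theorem IsMarked.even_sum_left (h : IsMarked X nu eta) : Even nu.sum := by
  have hcard : height nu 1 = Multiset.card nu :=
    congrArg _ (Multiset.filter_eq_self.2 h.inP_left.1)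
  have heven := h.inP_left.even_truncSum_add 0
  rw [truncSum_eq_sum_height, Finset.sum_range_zero, zero_add, zero_add, zero_add, hcard] at heven
  cases X with
  | C => exact heven
  | B | D => exact (Nat.even_add.1 heven).2 ((h.2.2.2 (by simp)).mul_right _)

theorem IsMarked.sumParity_right (h : IsMarked X nu eta) : sumParity X eta.sum := by
  have hsum := h.2.1
  have hnu := h.even_sum_left
  rw [Multiset.sum_add] at hsum
  cases X <;> simp only [sumParity] at hsum ⊢ <;> grind

theorem IsMarked.even_truncSum_left_iff (h : IsMarked X nu eta) (ha : badPart X a) :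
    Even (truncSum nu a) ↔ Even (height nu (a + 1)) := by
  have heven := h.inP_left.even_truncSum_add a
  rw [badPart_iff] at ha
  have hmul : Even (height nu (a + 1) * (a + parityShift X)) ↔ Even (height nu (a + 1)) := by
    rw [Nat.even_mul, or_iff_left (Nat.not_even_iff_odd.2 ha)]
  rw [add_right_comm, Nat.even_add, Nat.even_add, hmul, iff_true_right h.even_sum_left] at heven
  exact heven

theorem Markable.badPart (h : Markable X l (a + 1)) : badPart X a := by
  have hmark := h.2.1
  cases X <;> simp only [NilDual.badPart, markParity] at hmark ⊢ <;> grind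

theorem Markable.even_truncSum (h : Markable X l (a + 1)) (hl : InP X l)
    (hsum : sumParity X l.sum) : Even (truncSum l a) := by
  have heven := hl.even_truncSum_add a
  obtain ⟨-, hmark, hheight⟩ := h
  cases X <;> simp only [markParity, sumParity, parityShift] at * <;> grind

theorem IsMarked.even_sum_transpose_add_innerDual (h : IsMarked X nu eta)
    (hX : dualType X = PType.C) : Even (transpose (nu + innerDual X eta)).sum := by
  obtain rfl : X = PType.B := by cases X <;> simp_all [dualType]
  have heven : Even (down eta).sum := even_sum_down h.inP_right.1 h.sumParity_right
  have hsum := (isCollapse_collapse (X := PType.C) fun _ => heven).2.1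
  rw [sum_transpose, Multiset.sum_add, innerDual, hsum]
  exact h.even_sum_left.add heven

theorem IsMarked.even_height_left_iff_le_psum_dS (h : IsMarked X nu eta)
    (hne : X = PType.C → eta ≠ 0) (hmark : Markable X (nu + eta) (a + 1)) :
    Even (height nu (a + 1)) ↔ truncSum (nu + eta) a + markOffset X ≤ psum (dS X nu eta) a := by
  have hbad := hmark.badPart
  have heven := hmark.even_truncSum h.1 h.2.1
  have hthreshold :
      Even (truncSum (nu + eta) a + markOffset X + a * parityShift (dualType X)) := by
    cases X <;> simp only [badPart, markOffset, dualType, parityShift] at hbad ⊢ <;> grind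
  have heta := truncSum_add_markOffset_le_innerDual_iff h.inP_right h.sumParity_right hne hbad
  have hdual : truncSum (nu + eta) a + markOffset X ≤ psum (dS X nu eta) a ↔
      truncSum eta a + markOffset X ≤ truncSum (innerDual X eta) a := by
    rw [dS_eq_collapse_innerDual,
      le_psum_collapse_iff h.even_sum_transpose_add_innerDual hthreshold,
      psum_transpose, truncSum_add, truncSum_add, add_assoc, Nat.add_le_add_iff_left]
  rw [truncSum_add] at heven
  rw [hdual, heta, ← h.even_truncSum_left_iff hbad, Nat.even_add.1 heven]

end Marked

/-- Theorem 5.1 of the paper: for two reduced marked partitions with the same underlying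
partition, the Sommers duals agree if and only if the markings agree. -/
theorem dS_injective_on_reduced_markings (X : PType) (nu eta nu' eta' : Ptn)
    (heq : nu + eta = nu' + eta')
    (h : IsMarked X nu eta) (h' : IsMarked X nu' eta')
    (hr : Reduced X (nu + eta) nu) (hr' : Reduced X (nu' + eta') nu')
    (hC : X = PType.C → eta ≠ 0 ∧ eta' ≠ 0) :
    dS X nu eta = dS X nu' eta' ↔ nu = nu' := by
  refine ⟨fun hdual => ?_, ?_⟩
  · refine eq_of_forall_even_height_iff h.nodup_left h'.nodup_left fun a ha => ?_
    have hmark : Markable X (nu + eta) a :=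
      (Multiset.mem_add.1 ha).elim (hr a) fun ha' => heq ▸ hr' a ha'
    obtain ⟨j, rfl⟩ := Nat.exists_eq_succ_of_ne_zero (h.1.1 a hmark.1).ne'
    rw [h.even_height_left_iff_le_psum_dS (fun hX => (hC hX).1) hmark,
      h'.even_height_left_iff_le_psum_dS (fun hX => (hC hX).2) (heq ▸ hmark), heq, hdual]
  · rintro rfl
    rw [add_left_cancel heq]

end NilDual
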